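/- Assume Q_k = k + O(1). If X and Y are sequences of positive reals with ln X_k = α_θ·ln k + o(1) as k → ∞ and φ_j(X,Y) = Q_j for all j ≥ 1, then ln Y_j = α_θ·ln j + o(1) as j → ∞. -/

import Mathlib

open Filter Asymptotics MeasureTheory
open scoped ENNReal Topology

/-- `Theta θ E' E` is the argument of the complex number `E' + E·e^{iθ}`;
for `0 < θ < π` and `E', E > 0` it lies in `(0, θ)` and equals
`arctan (sin θ / (E'/E + cos θ))` with the branch taken in `(0, θ)`. -/
noncomputable def Theta (θ E' E : ℝ) : ℝ :=
  Complex.arg ((E' : ℂ) + (E : ℂ) * Complex.exp (θ * Complex.I))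

/-- `phi θ X Y j = (1/π) · ∑_{k ≥ 1} Θ(X_k, Y_j) ∈ (0, ∞]`, where sequences are
indexed by `ℕ` and only the values at indices `k ≥ 1` are used. -/
noncomputable def phi (θ : ℝ) (X Y : ℕ → ℝ) (j : ℕ) : ℝ≥0∞ :=
  ENNReal.ofReal (1 / Real.pi) * ∑' k : ℕ, ENNReal.ofReal (Theta θ (X (k + 1)) (Y j))

/-- `Pker θ E E' = E·E' / (E² + 2·cos θ·E·E' + E'²)`. -/
noncomputable def Pker (θ E E' : ℝ) : ℝ :=
  E * E' / (E ^ 2 + 2 * Real.cos θ * E * E' + E' ^ 2)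

/-- The drift `D_α = (1/π) ∫_0^∞ Θ(s^α, 1) ds`. -/
noncomputable def Drift (θ α : ℝ) : ℝ :=
  (1 / Real.pi) * ∫ s in Set.Ioi (0 : ℝ), Theta θ (s ^ α) 1

/-- `S_ε = ∫_0^∞ s^{-ε} / (s^{α_θ} + 2 cos θ + s^{-α_θ}) ds` with `α_θ = 1 + θ/π`. -/
noncomputable def Sfun (θ ε : ℝ) : ℝ :=
  ∫ s in Set.Ioi (0 : ℝ), s ^ (-ε) /
    (s ^ (1 + θ / Real.pi) + 2 * Real.cos θ + s ^ (-(1 + θ / Real.pi)))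


noncomputable def kap (θ u : ℝ) : ℝ := Real.sin θ / (u ^ 2 + 2 * u * Real.cos θ + 1)

lemma kap_den_pos {θ : ℝ} (hs : 0 < Real.sin θ) (u : ℝ) :
    0 < u ^ 2 + 2 * u * Real.cos θ + 1 := by
  have := Real.sin_sq_add_cos_sq θ
  nlinarith [sq_nonneg (u + Real.cos θ), mul_pos hs hs]

lemma kap_pos {θ : ℝ} (hs : 0 < Real.sin θ) (u : ℝ) : 0 < kap θ u :=
  div_pos hs (kap_den_pos hs u)

lemma exp_im (θ : ℝ) : (Complex.exp (θ * Complex.I)).im = Real.sin θ := by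
  rw [Complex.exp_ofReal_mul_I_im]

lemma exp_re (θ : ℝ) : (Complex.exp (θ * Complex.I)).re = Real.cos θ := by
  rw [Complex.exp_ofReal_mul_I_re]

lemma Theta_one (θ x : ℝ) : Theta θ x 1 = Complex.arg (x + Complex.exp (θ * Complex.I)) := by
  simp [Theta]

lemma Theta_hom (θ : ℝ) {x E : ℝ} (hE : 0 < E) : Theta θ x E = Theta θ (x / E) 1 := by
  rw [Theta_one, ← Complex.arg_real_mul _ hE, Theta]
  congr 1
  push_cast
  have : (E : ℂ) ≠ 0 := by exact_mod_cast hE.ne'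
  field_simp

lemma Theta_deriv {θ : ℝ} (hs : 0 < Real.sin θ) (x : ℝ) :
    HasDerivAt (fun x => Theta θ x 1) (-kap θ x) x := by
  have h1 : HasDerivAt (fun x : ℝ => (x : ℂ) + Complex.exp (θ * Complex.I)) 1 x :=
    (Complex.ofRealCLM.hasDerivAt (x := x)).add_const _
  have hsl : (x : ℂ) + Complex.exp (θ * Complex.I) ∈ Complex.slitPlane := by
    right
    simp [exp_im, hs.ne']
  have h2 := h1.clog_real hsl
  have h3 := (Complex.imCLM.hasFDerivAt (x := Complex.log ((x : ℂ) + Complex.exp (θ * Complex.I)))).comp_hasDerivAt x h2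
  convert! h3 using 1
  · funext y
    simp [Theta_one, Complex.log_im]
  · have hd := kap_den_pos hs x
    have := Real.sin_sq_add_cos_sq θ
    simp [kap, Complex.normSq_apply, exp_im, exp_re]
    rw [neg_div]
    congr 2
    nlinarith

lemma Theta_tendsto (θ : ℝ) : Tendsto (fun x => Theta θ x 1) atTop (𝓝 0) := by
  have h1 : Tendsto (fun x : ℝ => (1 : ℂ) + (x : ℂ)⁻¹ * Complex.exp (θ * Complex.I)) atTop (𝓝 1) := by
    have h : Tendsto (fun x : ℝ => ((x⁻¹ : ℝ) : ℂ)) atTop (𝓝 ((0 : ℝ) : ℂ)) :=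
      (Complex.continuous_ofReal.tendsto 0).comp tendsto_inv_atTop_zero
    have := (h.mul_const (Complex.exp (θ * Complex.I))).const_add 1
    simpa using this
  have h2 : ContinuousAt Complex.arg 1 := Complex.continuousAt_arg (by simp)
  have h3 := h2.tendsto.comp h1
  rw [Complex.arg_one] at h3
  refine h3.congr' ?_
  filter_upwards [eventually_gt_atTop 0] with x hx
  rw [Theta_one, Function.comp_apply, ← Complex.arg_real_mul _ hx]
  congr 1
  have : (x : ℂ) ≠ 0 := by exact_mod_cast hx.ne'
  field_simp

lemma Theta_anti_one {θ : ℝ} (hs : 0 < Real.sin θ) : Antitone (fun x => Theta θ x 1) := by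
  apply antitone_of_deriv_nonpos
  · exact fun x => (Theta_deriv hs x).differentiableAt
  · intro x
    rw [(Theta_deriv hs x).deriv]
    linarith [kap_pos hs x]

lemma Theta_anti {θ E : ℝ} (hs : 0 < Real.sin θ) (hE : 0 < E) {x y : ℝ} (h : x ≤ y) :
    Theta θ y E ≤ Theta θ x E := by
  rw [Theta_hom θ hE, Theta_hom θ hE]
  exact Theta_anti_one hs (by gcongr)

lemma Theta_le_pi (θ x y : ℝ) : Theta θ x y ≤ Real.pi := Complex.arg_le_pi _

lemma Theta_lint {θ : ℝ} (hs : 0 < Real.sin θ) (x : ℝ) :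
    ∫⁻ u in Set.Ioi x, ENNReal.ofReal (kap θ u) = ENNReal.ofReal (Theta θ x 1) := by
  have hneg : ∀ y ∈ Set.Ioi x, -kap θ y ≤ 0 := fun y _ => by linarith [kap_pos hs y]
  have hi := integrableOn_Ioi_deriv_of_nonpos' (a := x) (fun y _ => Theta_deriv hs y) hneg
    (Theta_tendsto θ)
  have hv := integral_Ioi_of_hasDerivAt_of_nonpos' (a := x) (fun y _ => Theta_deriv hs y) hneg
    (Theta_tendsto θ)
  rw [← ofReal_integral_eq_lintegral_ofReal]
  · rw [integral_neg] at hv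
    congr 1; linarith
  · have := hi.neg
    simpa [IntegrableOn] using! this
  · exact ae_of_all _ fun y => (kap_pos hs y).le

/-- layer cake -/
lemma Theta_layer {θ : ℝ} (hs : 0 < Real.sin θ) {α m : ℝ} (hα : 0 < α) (hm : 0 < m) :
    ∫⁻ s in Set.Ioi (0 : ℝ), ENNReal.ofReal (Theta θ (m * s ^ α) 1)
      = ENNReal.ofReal (m ^ (-α⁻¹)) *
        ∫⁻ u in Set.Ioi (0 : ℝ), ENNReal.ofReal (u ^ α⁻¹ * kap θ u) := by
  have hkm : Measurable (kap θ) := by unfold kap; fun_prop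
  have e1 : ∀ s ∈ Set.Ioi (0 : ℝ), ENNReal.ofReal (Theta θ (m * s ^ α) 1) =
      ∫⁻ u in Set.Ioi (0 : ℝ),
        Set.indicator {p : ℝ × ℝ | m * p.1 ^ α < p.2} (fun p => ENNReal.ofReal (kap θ p.2)) (s, u) := by
    intro s hs0
    have hs0' : 0 < m * s ^ α := mul_pos hm (Real.rpow_pos_of_pos hs0 _)
    rw [← Theta_lint hs, ← lintegral_indicator measurableSet_Ioi,
      ← lintegral_indicator measurableSet_Ioi]
    congr 1
    funext u
    simp only [Set.indicator_apply, Set.mem_Ioi, Set.mem_ofPred_eq]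
    by_cases h : m * s ^ α < u
    · simp [h, hs0'.trans h]
    · simp [h]
  rw [setLIntegral_congr_fun measurableSet_Ioi e1]
  rw [lintegral_lintegral_swap]
  · rw [← lintegral_const_mul']
    swap
    · exact ENNReal.ofReal_ne_top
    apply setLIntegral_congr_fun measurableSet_Ioi
    intro u hu
    have hu0 : (0 : ℝ) < u := hu
    have e2 : ∀ s ∈ Set.Ioi (0 : ℝ),
        Set.indicator {p : ℝ × ℝ | m * p.1 ^ α < p.2} (fun p => ENNReal.ofReal (kap θ p.2)) (s, u)
        = Set.indicator (Set.Iio ((u / m) ^ α⁻¹)) (fun _ => ENNReal.ofReal (kap θ u)) s := by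
      intro s hs0
      have hs0' : (0 : ℝ) < s := hs0
      simp only [Set.indicator_apply, Set.mem_Iio, Set.mem_ofPred_eq]
      congr 1
      rw [Real.lt_rpow_inv_iff_of_pos hs0'.le (by positivity) hα, lt_div_iff₀ hm, mul_comm]
    simp only []
    rw [setLIntegral_congr_fun measurableSet_Ioi e2, lintegral_indicator measurableSet_Iio,
      lintegral_const, Measure.restrict_apply MeasurableSet.univ,
      Measure.restrict_apply (by simp)]
    rw [Set.univ_inter, Set.Iio_inter_Ioi, Real.volume_Ioo, ← ENNReal.ofReal_mul (kap_pos hs u).le,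
      ← ENNReal.ofReal_mul (by positivity)]
    congr 1
    rw [Real.div_rpow hu0.le hm.le, Real.rpow_neg hm.le]
    ring
  · apply Measurable.aemeasurable
    apply Measurable.indicator
    · fun_prop
    · exact measurableSet_lt (by fun_prop) (by fun_prop)

lemma rpow_exp_int {a b : ℝ} (ha : -1 < a) (hb : 0 < b) :
    IntegrableOn (fun t : ℝ => t ^ a * Real.exp (-(b * t))) (Set.Ioi 0) := by
  have := integrableOn_rpow_mul_exp_neg_mul_rpow (p := 1) ha one_pos hb
  simpa using this

lemma lap_norm (a : ℝ) (z : ℂ) {t : ℝ} (ht : 0 < t) :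
    ‖((t ^ a : ℝ) : ℂ) * Complex.exp (-(z * t))‖ = t ^ a * Real.exp (-(z.re * t)) := by
  rw [norm_mul, Complex.norm_real, Complex.norm_exp, Real.norm_of_nonneg (Real.rpow_nonneg ht.le _)]
  simp

lemma lap_meas (a : ℝ) (z : ℂ) (μ : Measure ℝ) :
    AEStronglyMeasurable (fun t : ℝ => ((t ^ a : ℝ) : ℂ) * Complex.exp (-(z * t))) μ := by
  apply Measurable.aestronglyMeasurable
  fun_prop

lemma lap_int {a : ℝ} {z : ℂ} (ha : -1 < a) (hz : 0 < z.re) :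
    IntegrableOn (fun t : ℝ => ((t ^ a : ℝ) : ℂ) * Complex.exp (-(z * t))) (Set.Ioi 0) := by
  apply Integrable.mono' (rpow_exp_int ha hz) (lap_meas _ _ _)
  filter_upwards [ae_restrict_mem measurableSet_Ioi] with t ht
  rw [lap_norm a z ht]

lemma lap_diff {a : ℝ} (ha : 0 < a) {z : ℂ} (hz : 0 < z.re) :
    DifferentiableAt ℂ (fun z : ℂ => ∫ t in Set.Ioi (0 : ℝ),
      ((t ^ (a - 1) : ℝ) : ℂ) * Complex.exp (-(z * t))) z := by
  have hs : {y : ℂ | z.re / 2 < y.re} ∈ 𝓝 z := by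
    apply (isOpen_lt continuous_const Complex.continuous_re).mem_nhds
    show z.re / 2 < z.re
    linarith
  refine (hasDerivAt_integral_of_dominated_loc_of_deriv_le
    (F := fun (y : ℂ) (t : ℝ) => ((t ^ (a - 1) : ℝ) : ℂ) * Complex.exp (-(y * t)))
    (F' := fun (y : ℂ) (t : ℝ) => -(((t ^ a : ℝ) : ℂ) * Complex.exp (-(y * t))))
    (bound := fun t : ℝ => t ^ a * Real.exp (-(z.re / 2 * t))) hs
    (Eventually.of_forall fun y => lap_meas _ _ _) (lap_int (by linarith) hz)
    (lap_meas _ _ _).neg ?_ (rpow_exp_int (by linarith) (by linarith)) ?_).2.differentiableAt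
  · filter_upwards [ae_restrict_mem measurableSet_Ioi] with t ht y hy
    have ht' : (0 : ℝ) < t := ht
    have hy' : z.re / 2 < y.re := hy
    rw [norm_neg, lap_norm a y ht]
    gcongr
  · filter_upwards [ae_restrict_mem measurableSet_Ioi] with t ht y hy
    have ht' : (0 : ℝ) < t := ht
    have h1 : HasDerivAt (fun y : ℂ => -(y * t)) (-(1 * (t : ℂ))) y :=
      ((hasDerivAt_id y).mul_const (t : ℂ)).neg
    have h2 := h1.cexp.const_mul ((t ^ (a - 1) : ℝ) : ℂ)
    convert! h2 using 1
    have : t ^ a = t ^ (a - 1) * t := by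
      rw [← Real.rpow_add_one ht'.ne']; congr 1; ring
    rw [this]
    push_cast
    ring

lemma lap_eq {a : ℝ} (ha : 0 < a) {z : ℂ} (hz : 0 < z.re) :
    ∫ t in Set.Ioi (0 : ℝ), ((t ^ (a - 1) : ℝ) : ℂ) * Complex.exp (-(z * t))
      = z ^ (-(a : ℂ)) * (Real.Gamma a : ℂ) := by
  have hopen : IsOpen {y : ℂ | 0 < y.re} := isOpen_lt continuous_const Complex.continuous_re
  have hf : AnalyticOnNhd ℂ (fun z : ℂ => ∫ t in Set.Ioi (0 : ℝ),
      ((t ^ (a - 1) : ℝ) : ℂ) * Complex.exp (-(z * t))) {y : ℂ | 0 < y.re} :=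
    DifferentiableOn.analyticOnNhd (fun y hy => (lap_diff ha hy).differentiableWithinAt) hopen
  have hg : AnalyticOnNhd ℂ (fun z : ℂ => z ^ (-(a : ℂ)) * (Real.Gamma a : ℂ)) {y : ℂ | 0 < y.re} := by
    refine DifferentiableOn.analyticOnNhd (fun y hy => ?_) hopen
    apply DifferentiableAt.differentiableWithinAt
    exact ((differentiableAt_id).cpow_const (Or.inl hy)).mul_const _
  refine hf.eqOn_of_preconnected_of_frequently_eq hg
    (convex_halfSpace_re_gt 0).isPreconnected (z₀ := ((1 : ℝ) : ℂ)) (by simp) ?_ hz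
  have h1 : ∃ᶠ x : ℝ in 𝓝[≠] 1, (∫ t in Set.Ioi (0 : ℝ),
      ((t ^ (a - 1) : ℝ) : ℂ) * Complex.exp (-((x : ℂ) * t)))
      = (x : ℂ) ^ (-(a : ℂ)) * (Real.Gamma a : ℂ) := by
    apply Eventually.frequently
    have : ∀ᶠ x : ℝ in 𝓝[≠] 1, 0 < x := nhdsWithin_le_nhds (eventually_gt_nhds one_pos)
    filter_upwards [this] with x hx
    have := Real.integral_rpow_mul_exp_neg_mul_Ioi ha hx
    rw [← Complex.ofReal_neg, ← Complex.ofReal_cpow hx.le, ← Complex.ofReal_mul, Real.rpow_neg hx.le,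
      ← Real.inv_rpow hx.le, ← one_div, ← this, ← integral_complex_ofReal]
    congr 1
    funext t
    push_cast
    rfl
  have hT : Tendsto (fun x : ℝ => (x : ℂ)) (𝓝[≠] 1) (𝓝[≠] ((1 : ℝ) : ℂ)) :=
    Complex.continuous_ofReal.continuousAt.tendsto.inf (by
      apply tendsto_principal_principal.2
      intro x hx h
      apply hx
      simpa using h)
  exact hT.frequently h1

lemma cpow_mul_pos (c s : ℂ) (hc : c ≠ 0) {t : ℝ} (ht : 0 < t) :
    (c * t) ^ s = c ^ s * (t : ℂ) ^ s := by
  have ht' : (t : ℂ) ≠ 0 := by exact_mod_cast ht.ne'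
  rw [Complex.cpow_def_of_ne_zero (mul_ne_zero hc ht'), Complex.cpow_def_of_ne_zero hc,
    Complex.cpow_def_of_ne_zero ht', Complex.log_mul_ofReal t ht c hc, ← Complex.exp_add,
    Complex.ofReal_log ht.le]
  congr 1
  ring

lemma beta_int {a : ℝ} (ha : 0 < a) (ha1 : a < 1) {c d : ℂ} (hc : 0 < c.re) (hd : 0 < d.re) :
    IntegrableOn (fun r : ℝ => ((r ^ (a - 1) : ℝ) : ℂ) / (c * r + d)) (Set.Ioi 0) ∧
    ∫ r in Set.Ioi (0 : ℝ), ((r ^ (a - 1) : ℝ) : ℂ) / (c * r + d)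
      = c ^ (-(a : ℂ)) * d ^ ((a : ℂ) - 1) * (Real.Gamma a * Real.Gamma (1 - a) : ℝ) := by
  have hc0 : c ≠ 0 := by rintro rfl; simp at hc
  set f : ℝ × ℝ → ℂ := fun p => ((p.1 ^ (a - 1) : ℝ) : ℂ) * Complex.exp (-((c * p.1 + d) * p.2))
    with hfdef
  have hfm : AEStronglyMeasurable f
      ((volume.restrict (Set.Ioi (0 : ℝ))).prod (volume.restrict (Set.Ioi (0 : ℝ)))) := by
    apply Measurable.aestronglyMeasurable
    fun_prop
  have hsplit : ∀ r t : ℝ, f (r, t) = Complex.exp (-(d * t)) *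
      (((r ^ (a - 1) : ℝ) : ℂ) * Complex.exp (-((c * t) * r))) := by
    intro r t
    have : Complex.exp (-((c * r + d) * t)) =
        Complex.exp (-(d * t)) * Complex.exp (-((c * t) * r)) := by
      rw [← Complex.exp_add]; congr 1; ring
    simp only [hfdef]
    rw [this]; ring
  have hct : ∀ t : ℝ, 0 < t → 0 < (c * t).re := by
    intro t ht
    simpa using mul_pos hc ht
  have hint : Integrable f
      ((volume.restrict (Set.Ioi (0 : ℝ))).prod (volume.restrict (Set.Ioi (0 : ℝ)))) := by
    rw [integrable_prod_iff' hfm]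
    constructor
    · filter_upwards [ae_restrict_mem measurableSet_Ioi] with t ht
      simp_rw [hsplit]
      exact (lap_int (by linarith) (hct t ht)).const_mul _
    · have h0 : IntegrableOn (fun t : ℝ => (c.re ^ (-a) * Real.Gamma a) *
          (t ^ (-a) * Real.exp (-(d.re * t)))) (Set.Ioi 0) :=
        (rpow_exp_int (by linarith) hd).const_mul _
      refine Integrable.congr h0 ?_
      filter_upwards [ae_restrict_mem measurableSet_Ioi] with t ht
      have ht' : (0 : ℝ) < t := ht
      have h1 : ∫ r in Set.Ioi (0 : ℝ), ‖f (r, t)‖ = ∫ r in Set.Ioi (0 : ℝ),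
          Real.exp (-(d.re * t)) * (r ^ (a - 1) * Real.exp (-((c.re * t) * r))) := by
        apply setIntegral_congr_fun measurableSet_Ioi
        intro r hr
        simp only []
        rw [hsplit, norm_mul, lap_norm _ _ hr, Complex.norm_exp]
        simp
      rw [h1, integral_const_mul, Real.integral_rpow_mul_exp_neg_mul_Ioi ha (mul_pos hc ht'),
        one_div, Real.inv_rpow (by positivity), Real.mul_rpow hc.le ht'.le, Real.rpow_neg hc.le,
        Real.rpow_neg ht'.le, mul_inv]
      ring
  have hinner : ∀ r ∈ Set.Ioi (0 : ℝ), ∫ t in Set.Ioi (0 : ℝ), f (r, t) =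
      ((r ^ (a - 1) : ℝ) : ℂ) / (c * r + d) := by
    intro r hr
    have hre : (-(c * r + d)).re < 0 := by
      have := hct r hr
      simp only [Complex.neg_re, Complex.add_re]
      linarith
    have h2 := integral_exp_mul_complex_Ioi hre 0
    simp only [hfdef]
    rw [integral_const_mul]
    simp_rw [← neg_mul]
    rw [h2]
    rw [Complex.ofReal_zero, mul_zero, Complex.exp_zero, neg_div_neg_eq, mul_one_div]
  constructor
  · have := hint.integral_prod_left
    refine Integrable.congr this ?_
    filter_upwards [ae_restrict_mem measurableSet_Ioi] with r hr
    exact hinner r hr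
  · rw [← setIntegral_congr_fun measurableSet_Ioi hinner]
    rw [integral_integral_swap (f := fun r t => f (r, t)) hint]
    have h3 : ∀ t ∈ Set.Ioi (0 : ℝ), ∫ r in Set.Ioi (0 : ℝ), f (r, t) =
        (c ^ (-(a : ℂ)) * (Real.Gamma a : ℂ)) *
          (((t ^ ((1 - a) - 1) : ℝ) : ℂ) * Complex.exp (-(d * t))) := by
      intro t ht
      have ht' : (0 : ℝ) < t := ht
      simp_rw [hsplit]
      rw [integral_const_mul, lap_eq ha (hct t ht), cpow_mul_pos _ _ hc0 ht,
        Complex.ofReal_cpow ht'.le]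
      have : (((1 - a - 1 : ℝ)) : ℂ) = -(a : ℂ) := by push_cast; ring
      rw [this]
      ring
    rw [setIntegral_congr_fun measurableSet_Ioi h3, integral_const_mul,
      lap_eq (by linarith) hd]
    have : -((1 - a : ℝ) : ℂ) = (a : ℂ) - 1 := by push_cast; ring
    rw [this]
    push_cast
    ring

lemma kap_int {θ : ℝ} (hθ : 0 < θ) (hθπ : θ < Real.pi) {a : ℝ} (ha : a = (1 + θ / Real.pi)⁻¹) :
    ∫⁻ u in Set.Ioi (0 : ℝ), ENNReal.ofReal (u ^ a * kap θ u) = ENNReal.ofReal Real.pi := by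
  have hpi := Real.pi_pos
  have hq : 0 < θ / Real.pi := by positivity
  have ha0 : 0 < a := by rw [ha]; positivity
  have ha1 : a < 1 := by rw [ha]; exact inv_lt_one_of_one_lt₀ (by linarith)
  have hs : 0 < Real.sin θ := Real.sin_pos_of_pos_of_lt_pi hθ hθπ
  set d : ℂ := Complex.exp ((θ / 2 : ℝ) * Complex.I) with hd
  set c : ℂ := Complex.exp ((-(θ / 2) : ℝ) * Complex.I) with hc
  set w : ℂ := Complex.exp (θ * Complex.I) with hw
  have hcos : 0 < Real.cos (θ / 2) := Real.cos_pos_of_mem_Ioo ⟨by linarith, by linarith⟩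
  have hdre : 0 < d.re := by rw [hd, exp_re]; exact hcos
  have hcre : 0 < c.re := by rw [hc, exp_re, Real.cos_neg]; exact hcos
  have hc0 : c ≠ 0 := Complex.exp_ne_zero _
  have hd0 : d ≠ 0 := Complex.exp_ne_zero _
  have hdc : d = c * w := by
    rw [hd, hc, hw, ← Complex.exp_add]; congr 1; push_cast; ring
  obtain ⟨hi, hv⟩ := beta_int ha0 ha1 hcre hdre
  have hpt : ∀ u ∈ Set.Ioi (0 : ℝ),
      (d * (((u ^ (a - 1) : ℝ) : ℂ) / (c * u + d))).im = u ^ a * kap θ u := by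
    intro u hu
    have hu' : (0 : ℝ) < u := hu
    have e1 : d * (((u ^ (a - 1) : ℝ) : ℂ) / (c * u + d)) =
        ((u ^ (a - 1) : ℝ) : ℂ) * (w / (u + w)) := by
      have : c * u + d = c * (u + w) := by rw [hdc]; ring
      rw [this, ← mul_div_mul_left w (u + w) hc0, ← hdc]
      ring
    have e2 : (w / (u + w)).im = u * kap θ u := by
      have h1 : Complex.normSq (u + w) = u ^ 2 + 2 * u * Real.cos θ + 1 := by
        have := Real.sin_sq_add_cos_sq θ
        rw [Complex.normSq_apply, Complex.add_re, Complex.add_im, hw, exp_re, exp_im]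
        simp only [Complex.ofReal_re, Complex.ofReal_im]
        nlinarith
      rw [Complex.div_im, h1, Complex.add_re, Complex.add_im, hw, exp_re, exp_im, kap]
      simp only [Complex.ofReal_re, Complex.ofReal_im]
      ring
    have e3 : u ^ a = u ^ (a - 1) * u := by
      rw [← Real.rpow_add_one hu'.ne']; congr 1; ring
    rw [e1, Complex.im_ofReal_mul, e2, e3]
    ring
  have hi2 := (hi.const_mul d).im
  have hi3 : IntegrableOn (fun u : ℝ => u ^ a * kap θ u) (Set.Ioi 0) := by
    refine Integrable.congr hi2 ?_
    filter_upwards [ae_restrict_mem measurableSet_Ioi] with u hu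
    exact hpt u hu
  have hval : ∫ u in Set.Ioi (0 : ℝ), u ^ a * kap θ u = Real.pi := by
    rw [← setIntegral_congr_fun measurableSet_Ioi hpt]
    have := integral_im (hi.const_mul d)
    simp only [RCLike.im_to_complex] at this
    rw [this, integral_const_mul, hv]
    have hlogd : Complex.log d = (θ / 2 : ℝ) * Complex.I := by
      rw [hd, Complex.log_exp] <;> simp <;> linarith
    have hlogc : Complex.log c = (-(θ / 2) : ℝ) * Complex.I := by
      rw [hc, Complex.log_exp] <;> simp <;> linarith
    have e4 : d * (c ^ (-(a : ℂ)) * d ^ ((a : ℂ) - 1) * (Real.Gamma a * Real.Gamma (1 - a) : ℝ))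
        = ((Real.Gamma a * Real.Gamma (1 - a) : ℝ) : ℂ) *
          Complex.exp ((a * θ : ℝ) * Complex.I) := by
      rw [Complex.cpow_def_of_ne_zero hc0, Complex.cpow_def_of_ne_zero hd0, hlogd, hlogc]
      have : Complex.exp ((a * θ : ℝ) * Complex.I) = d *
        (Complex.exp ((-(θ / 2) : ℝ) * Complex.I * -(a : ℂ)) *
          Complex.exp ((θ / 2 : ℝ) * Complex.I * ((a : ℂ) - 1))) := by
        rw [hd, ← Complex.exp_add, ← Complex.exp_add]
        congr 1
        push_cast
        ring
      rw [this]
      ring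
    rw [e4, Complex.im_ofReal_mul, exp_im, Real.Gamma_mul_Gamma_one_sub]
    have e5 : a * θ = Real.pi - Real.pi * a := by
      rw [ha]; field_simp; ring
    have e6 : 0 < Real.sin (Real.pi * a) :=
      Real.sin_pos_of_pos_of_lt_pi (by positivity) (by nlinarith)
    rw [e5, Real.sin_pi_sub]
    field_simp
  rw [← ofReal_integral_eq_lintegral_ofReal hi3, hval]
  filter_upwards [ae_restrict_mem measurableSet_Ioi] with u hu
  have hu' : (0 : ℝ) < u := hu
  have := kap_pos hs u
  simp only [Pi.zero_apply]
  positivity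

lemma Theta_lint_scaled {θ : ℝ} (hθ : 0 < θ) (hθπ : θ < Real.pi) {b E : ℝ} (hb : 0 < b) (hE : 0 < E) :
    ∫⁻ s in Set.Ioi (0 : ℝ), ENNReal.ofReal (Theta θ (b * s ^ (1 + θ / Real.pi)) E)
      = ENNReal.ofReal ((E / b) ^ (1 + θ / Real.pi)⁻¹ * Real.pi) := by
  have hpi := Real.pi_pos
  have hs : 0 < Real.sin θ := Real.sin_pos_of_pos_of_lt_pi hθ hθπ
  have h1 : ∀ s : ℝ, Theta θ (b * s ^ (1 + θ / Real.pi)) E =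
      Theta θ ((b / E) * s ^ (1 + θ / Real.pi)) 1 := by
    intro s
    rw [Theta_hom θ hE]; congr 1; ring
  simp_rw [h1]
  rw [Theta_layer hs (by positivity) (by positivity), kap_int hθ hθπ rfl,
    ← ENNReal.ofReal_mul (by positivity), Real.rpow_neg (by positivity),
    ← Real.inv_rpow (by positivity), inv_div]

lemma Ioi_eq_union : Set.Ioi (0 : ℝ) = ⋃ k : ℕ, Set.Ioc (k : ℝ) (k + 1) := by
  ext x
  simp only [Set.mem_Ioi, Set.mem_iUnion, Set.mem_Ioc]
  constructor
  · intro hx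
    have h1 : 1 ≤ ⌈x⌉₊ := Nat.one_le_ceil_iff.2 hx
    refine ⟨⌈x⌉₊ - 1, ?_, ?_⟩
    · rw [← Nat.lt_ceil]; omega
    · have := Nat.le_ceil x
      rw [Nat.cast_sub h1]
      simpa using this
  · rintro ⟨k, hk, _⟩
    exact lt_of_le_of_lt (Nat.cast_nonneg k) hk

lemma lint_split (g : ℝ → ℝ≥0∞) :
    ∫⁻ s in Set.Ioi (0 : ℝ), g s = ∑' k : ℕ, ∫⁻ s in Set.Ioc (k : ℝ) (k + 1), g s := by
  rw [Ioi_eq_union, lintegral_iUnion (fun k => measurableSet_Ioc)]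
  intro i j hij
  have := Set.pairwise_disjoint_Ioc_intCast ℝ (show (i : ℤ) ≠ j by exact_mod_cast hij)
  simpa [Function.onFun] using this

lemma sum_le_lint (g : ℝ → ℝ≥0∞) (hg : ∀ x y, 0 ≤ x → x ≤ y → g y ≤ g x) :
    ∑' k : ℕ, g (k + 1) ≤ ∫⁻ s in Set.Ioi (0 : ℝ), g s := by
  rw [lint_split]
  refine ENNReal.tsum_le_tsum fun k => ?_
  have hk : (0 : ℝ) ≤ k := Nat.cast_nonneg k
  calc g (k + 1) = ∫⁻ s in Set.Ioc (k : ℝ) (k + 1), g (k + 1) := by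
        simp
    _ ≤ _ := setLIntegral_mono' measurableSet_Ioc fun s hs =>
        hg _ _ (hk.trans hs.1.le) hs.2

lemma lint_le_sum (g : ℝ → ℝ≥0∞) (hg : ∀ x y, 0 ≤ x → x ≤ y → g y ≤ g x) :
    ∫⁻ s in Set.Ioi (0 : ℝ), g s ≤ g 0 + ∑' k : ℕ, g (k + 1) := by
  rw [lint_split]
  have h0 : g 0 + ∑' k : ℕ, g (k + 1) = ∑' k : ℕ, g k := by
    rw [tsum_eq_zero_add' (f := fun k : ℕ => g k) ENNReal.summable]
    simp
  rw [h0]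
  refine ENNReal.tsum_le_tsum fun k => ?_
  have hk : (0 : ℝ) ≤ k := Nat.cast_nonneg k
  calc ∫⁻ s in Set.Ioc (k : ℝ) (k + 1), g s ≤ ∫⁻ s in Set.Ioc (k : ℝ) (k + 1), g k :=
        setLIntegral_mono' measurableSet_Ioc fun s hs => hg _ _ hk hs.1.le
    _ = g k := by simp

lemma tsum_perturb (u v : ℕ → ℝ) (K : ℕ) (huK : ∀ k, K ≤ k → u k ≤ v k)
    (hu : ∀ k, u k ≤ Real.pi) :
    ∑' k, ENNReal.ofReal (u k) ≤ ∑' k, ENNReal.ofReal (v k) + ENNReal.ofReal (K * Real.pi) := by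
  have h1 : ∀ k, ENNReal.ofReal (u k) ≤ ENNReal.ofReal (v k) +
      (if k ∈ Finset.range K then ENNReal.ofReal Real.pi else 0) := by
    intro k
    by_cases hk : K ≤ k
    · exact (ENNReal.ofReal_le_ofReal (huK k hk)).trans le_self_add
    · rw [if_pos (by simpa using hk)]
      exact (ENNReal.ofReal_le_ofReal (hu k)).trans le_add_self
  refine (ENNReal.tsum_le_tsum h1).trans ?_
  rw [ENNReal.tsum_add]
  gcongr
  rw [tsum_eq_sum (s := Finset.range K) (fun k hk => if_neg hk), Finset.sum_ite_mem]
  simp [ENNReal.ofReal_mul]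

lemma phi_bounds {θ : ℝ} (hθ : 0 < θ) (hθπ : θ < Real.pi) (X : ℕ → ℝ) (ε : ℝ) (K : ℕ)
    (hX : ∀ k, K ≤ k → Real.exp (-ε) * ((k : ℝ) + 1) ^ (1 + θ / Real.pi) ≤ X (k + 1) ∧
      X (k + 1) ≤ Real.exp ε * ((k : ℝ) + 1) ^ (1 + θ / Real.pi))
    {E q : ℝ} (hE : 0 < E) (hq : 0 < q)
    (h : ENNReal.ofReal (1 / Real.pi) * ∑' k : ℕ, ENNReal.ofReal (Theta θ (X (k + 1)) E)
      = ENNReal.ofReal q) :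
    q ≤ (E / Real.exp (-ε)) ^ (1 + θ / Real.pi)⁻¹ + K ∧
    (E / Real.exp ε) ^ (1 + θ / Real.pi)⁻¹ ≤ q + K + 1 := by
  have hpi := Real.pi_pos
  have hs : 0 < Real.sin θ := Real.sin_pos_of_pos_of_lt_pi hθ hθπ
  have hS : ∑' k : ℕ, ENNReal.ofReal (Theta θ (X (k + 1)) E) = ENNReal.ofReal (q * Real.pi) := by
    rw [mul_comm q, ENNReal.ofReal_mul hpi.le, ← h, ← mul_assoc, ← ENNReal.ofReal_mul hpi.le]
    rw [mul_one_div_cancel hpi.ne']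
    simp
  have hanti : ∀ b : ℝ, 0 < b → ∀ x y : ℝ, 0 ≤ x → x ≤ y →
      ENNReal.ofReal (Theta θ (b * y ^ (1 + θ / Real.pi)) E) ≤
      ENNReal.ofReal (Theta θ (b * x ^ (1 + θ / Real.pi)) E) := by
    intro b hb x y hx hxy
    apply ENNReal.ofReal_le_ofReal
    apply Theta_anti hs hE
    gcongr
  constructor
  · have h1 := tsum_perturb (fun k => Theta θ (X (k + 1)) E)
      (fun k => Theta θ (Real.exp (-ε) * ((k : ℝ) + 1) ^ (1 + θ / Real.pi)) E) K
      (fun k hk => Theta_anti hs hE (hX k hk).1) (fun k => Theta_le_pi _ _ _)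
    have h2 := sum_le_lint
      (fun s => ENNReal.ofReal (Theta θ (Real.exp (-ε) * s ^ (1 + θ / Real.pi)) E))
      (hanti _ (Real.exp_pos _))
    rw [Theta_lint_scaled hθ hθπ (Real.exp_pos _) hE] at h2
    have h3 := h1.trans (add_le_add_left h2 _)
    rw [hS, ← ENNReal.ofReal_add (by positivity) (by positivity),
      ENNReal.ofReal_le_ofReal_iff (by positivity), ← add_mul] at h3
    exact le_of_mul_le_mul_right h3 hpi
  · have h1 := tsum_perturb
      (fun k => Theta θ (Real.exp ε * ((k : ℝ) + 1) ^ (1 + θ / Real.pi)) E)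
      (fun k => Theta θ (X (k + 1)) E) K
      (fun k hk => Theta_anti hs hE (hX k hk).2) (fun k => Theta_le_pi _ _ _)
    have h2 := lint_le_sum
      (fun s => ENNReal.ofReal (Theta θ (Real.exp ε * s ^ (1 + θ / Real.pi)) E))
      (hanti _ (Real.exp_pos _))
    rw [Theta_lint_scaled hθ hθπ (Real.exp_pos _) hE] at h2
    have h3 := h2.trans (add_le_add (ENNReal.ofReal_le_ofReal (Theta_le_pi _ _ _)) h1)
    rw [hS, ← ENNReal.ofReal_add (by positivity) (by positivity),
      ← ENNReal.ofReal_add (by positivity) (by positivity),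
      ENNReal.ofReal_le_ofReal_iff (by positivity)] at h3
    have h4 : (E / Real.exp ε) ^ (1 + θ / Real.pi)⁻¹ * Real.pi ≤ (q + K + 1) * Real.pi := by
      linarith
    exact le_of_mul_le_mul_right h4 hpi

lemma log_lim (Q : ℕ → ℝ)
    (hQ : (fun k : ℕ => Q k - (k : ℝ)) =O[atTop] fun _ : ℕ => (1 : ℝ)) (C : ℝ) :
    Tendsto (fun j : ℕ => Real.log (Q j + C) - Real.log j) atTop (𝓝 0) ∧
    ∀ᶠ j : ℕ in atTop, 0 < Q j + C := by
  have h1 : Tendsto (fun j : ℕ => (Q j + C) / j) atTop (𝓝 1) := by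
    have h2 : (fun k : ℕ => Q k - (k : ℝ) + C) =O[atTop] fun _ : ℕ => (1 : ℝ) :=
      hQ.add (isBigO_const_const C one_ne_zero _)
    have h3 : (fun _ : ℕ => (1 : ℝ)) =o[atTop] fun k : ℕ => (k : ℝ) := by
      rw [isLittleO_const_left]
      right
      simpa [Function.comp_def] using tendsto_natCast_atTop_atTop (R := ℝ)
    have h4 := (h2.trans_isLittleO h3).tendsto_div_nhds_zero.const_add 1
    rw [add_zero] at h4
    refine h4.congr' ?_
    filter_upwards [eventually_gt_atTop 0] with j hj
    have : (0 : ℝ) < j := by exact_mod_cast hj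
    field_simp
    ring
  have hpos : ∀ᶠ j : ℕ in atTop, 0 < Q j + C := by
    filter_upwards [h1.eventually_const_lt zero_lt_one, eventually_gt_atTop 0] with j h hj
    have : (0 : ℝ) < j := by exact_mod_cast hj
    exact (div_pos_iff_of_pos_right this).1 h
  refine ⟨?_, hpos⟩
  have h5 := h1.log one_ne_zero
  rw [Real.log_one] at h5
  refine h5.congr' ?_
  filter_upwards [hpos, eventually_gt_atTop 0] with j h hj
  have : (0 : ℝ) < j := by exact_mod_cast hj
  rw [Real.log_div h.ne' this.ne']

theorem stmt_5 (θ : ℝ) (hθ : 0 < θ) (hθπ : θ < Real.pi)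
    (Q : ℕ → ℝ) (hQpos : ∀ k, 1 ≤ k → 0 < Q k)
    (hQ : (fun k : ℕ => Q k - (k : ℝ)) =O[atTop] fun _ : ℕ => (1 : ℝ))
    (X Y : ℕ → ℝ) (hXpos : ∀ k, 1 ≤ k → 0 < X k) (hYpos : ∀ j, 1 ≤ j → 0 < Y j)
    (hX : (fun k : ℕ => Real.log (X k) - (1 + θ / Real.pi) * Real.log k)
      =o[atTop] fun _ : ℕ => (1 : ℝ))
    (hfix : ∀ j, 1 ≤ j → phi θ X Y j = ENNReal.ofReal (Q j)) :
    (fun j : ℕ => Real.log (Y j) - (1 + θ / Real.pi) * Real.log j)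
      =o[atTop] fun _ : ℕ => (1 : ℝ) := by
  have hpi := Real.pi_pos
  set α : ℝ := 1 + θ / Real.pi with hα
  have hα0 : 0 < α := by positivity
  rw [isLittleO_one_iff] at hX ⊢
  rw [Metric.tendsto_atTop] at hX
  rw [Metric.tendsto_nhds]
  intro δ hδ
  obtain ⟨K, hK⟩ := hX (δ / 2) (by positivity)
  have hXb : ∀ k, K ≤ k → Real.exp (-(δ / 2)) * ((k : ℝ) + 1) ^ α ≤ X (k + 1) ∧
      X (k + 1) ≤ Real.exp (δ / 2) * ((k : ℝ) + 1) ^ α := by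
    intro k hk
    have h1 := hK (k + 1) (by omega)
    rw [Real.dist_eq, sub_zero, abs_lt] at h1
    have hx := hXpos (k + 1) (by omega)
    have hk1 : (0 : ℝ) < (k : ℝ) + 1 := by positivity
    push_cast at h1
    rw [Real.rpow_def_of_pos hk1, ← Real.exp_add, ← Real.exp_add, ← Real.le_log_iff_exp_le hx,
      ← Real.log_le_iff_le_exp hx]
    constructor <;> linarith [h1.1, h1.2]
  obtain ⟨hl1, hp1⟩ := log_lim Q hQ (-(K : ℝ))
  obtain ⟨hl2, hp2⟩ := log_lim Q hQ ((K : ℝ) + 1)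
  have hd : 0 < δ / 2 / α := by positivity
  filter_upwards [hp1, hp2, Metric.tendsto_nhds.1 hl1 _ hd, Metric.tendsto_nhds.1 hl2 _ hd,
    eventually_ge_atTop 1] with j hj1 hj2 hb1 hb2 hj
  rw [Real.dist_eq, sub_zero, abs_lt] at hb1 hb2 ⊢
  have hY := hYpos j hj
  obtain ⟨hu, hv⟩ := phi_bounds hθ hθπ X (δ / 2) K hXb hY (hQpos j hj) (hfix j hj)
  rw [← hα] at hu hv
  have e1 : Q j + -(K : ℝ) ≤ (Y j / Real.exp (-(δ / 2))) ^ α⁻¹ := by linarith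
  have e2 : (Y j / Real.exp (δ / 2)) ^ α⁻¹ ≤ Q j + ((K : ℝ) + 1) := by linarith
  have l1 := Real.log_le_log hj1 e1
  have l2 := Real.log_le_log (by positivity) e2
  rw [Real.log_rpow (by positivity), Real.log_div hY.ne' (Real.exp_pos _).ne', Real.log_exp] at l1 l2
  rw [← div_eq_inv_mul, le_div_iff₀ hα0] at l1
  rw [← div_eq_inv_mul, div_le_iff₀ hα0] at l2
  have m1 := mul_lt_mul_of_pos_right hb1.1 hα0
  have m2 := mul_lt_mul_of_pos_right hb2.2 hα0
  rw [neg_mul, div_mul_cancel₀ _ hα0.ne'] at m1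
  rw [div_mul_cancel₀ _ hα0.ne'] at m2
  constructor <;> nlinarith
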